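/- arXiv:1804.05082 — 7 statements merged into one kernel-verified Lean document; each statement's English description precedes it below -/
import Mathlib

section
/- Let n ≥ 2, r, p, k be integers satisfying k²·(n−1) = r·p and 1 + r + p = n·r. Then k = 0; moreover, either (r, p) = (0, −1), or n = 2 and (r, p) = (1, 0). -/
/-- For integers `n ≥ 2`, `r`, `p`, `k` with `k²(n−1) = rp` and `1 + r + p = nr`, we must have
`k = 0`; moreover either `(r, p) = (0, −1)`, or `n = 2` and `(r, p) = (1, 0)`. -/
theorem stmt_2 (n r p k : ℤ) (hn : 2 ≤ n) (h1 : k ^ 2 * (n - 1) = r * p)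
    (h2 : 1 + r + p = n * r) :
    k = 0 ∧ ((r = 0 ∧ p = -1) ∨ (n = 2 ∧ r = 1 ∧ p = 0)) := by
  have hp : p = n * r - 1 - r := by linarith
  subst hp
  have key : (2 * (n - 1) * r - 1 - 2 * (n - 1) * k) * (2 * (n - 1) * r - 1 + 2 * (n - 1) * k) = 1 := by
    linear_combination (-4 * (n - 1)) * h1
  have hk : (n - 1) * k = 0 := by
    rcases Int.eq_one_or_neg_one_of_mul_eq_one' key with ⟨a, b⟩ | ⟨a, b⟩ <;> linarith
  have hk0 : k = 0 := by
    rcases mul_eq_zero.mp hk with h | h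
    · omega
    · exact h
  subst hk0
  refine ⟨rfl, ?_⟩
  have h3 : r * (n * r - 1 - r) = 0 := by linarith
  rcases mul_eq_zero.mp h3 with h | h
  · left
    subst h
    simp
  · right
    have h4 : (n - 1) * r = 1 := by linarith
    rcases Int.eq_one_or_neg_one_of_mul_eq_one' h4 with ⟨a, b⟩ | ⟨a, b⟩
    · exact ⟨by omega, b, h⟩
    · omega
end

section
/- Let n ≥ 2 and r ≥ 2 be integers, let ch₂ be an integer, and let d_h, d_g be real numbers such that −2 = (d_h² − d_g²) − 2·r·(ch₂ + r). Set χ := n·r − ch₂ − 2·r, and assume −4r < χ < 0. Then (n·r + ch₂)² − 2·n·d_h² < 0. -/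
/-- For integers `n ≥ 2`, `r ≥ 2`, `ch₂` and reals `d_h`, `d_g` with
`−2 = (d_h² − d_g²) − 2r(ch₂ + r)`, if `χ := nr − ch₂ − 2r` satisfies `−4r < χ < 0`, then the
discriminant `(nr + ch₂)² − 2n·d_h²` is negative. -/
theorem stmt_4 (n r ch2 : ℤ) (hn : 2 ≤ n) (hr : 2 ≤ r)
    (dh dg : ℝ)
    (hsph : (-2 : ℝ) = (dh ^ 2 - dg ^ 2) - 2 * (r : ℝ) * ((ch2 : ℝ) + (r : ℝ)))
    (hchi1 : -4 * r < n * r - ch2 - 2 * r) (hchi2 : n * r - ch2 - 2 * r < 0) :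
    ((n : ℝ) * (r : ℝ) + (ch2 : ℝ)) ^ 2 - 2 * (n : ℝ) * dh ^ 2 < 0 := by
  have hn' : (2:ℝ) ≤ n := by exact_mod_cast hn
  have hr' : (2:ℝ) ≤ r := by exact_mod_cast hr
  have h1 : (-4 : ℝ) * r < n * r - ch2 - 2 * r := by exact_mod_cast hchi1
  have h2 : (n : ℝ) * r - ch2 - 2 * r < 0 := by exact_mod_cast hchi2
  have hs : ((n : ℝ) * r - ch2) ^ 2 < 4 * (r : ℝ) ^ 2 := by nlinarith
  have hd : dh ^ 2 = dg ^ 2 + 2 * (r : ℝ) * (ch2 + r) - 2 := by linarith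
  have hg : 0 ≤ (n : ℝ) * dg ^ 2 := by positivity
  have hm : 0 ≤ ((n : ℝ) - 2) * ((r : ℝ) ^ 2 - 1) :=
    mul_nonneg (by linarith) (by nlinarith)
  rw [hd]
  nlinarith
end

section
/- Let n ≥ 2 be an integer, let ch₂ be an integer, and let d_h, d_g be real numbers such that −2 = (d_h² − d_g²) − 2·(ch₂ + 1). Set χ := n − ch₂ − 2, and assume −4 < χ < 0. If (n + ch₂)² − 2·n·d_h² > 0, then χ = −1 or χ = −3. -/
/-- Rank-one case: for an integer `n ≥ 2`, an integer `ch₂`, and reals `d_h`, `d_g` with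
`−2 = (d_h² − d_g²) − 2(ch₂ + 1)`, if `χ := n − ch₂ − 2` satisfies `−4 < χ < 0` and the
discriminant `(n + ch₂)² − 2n·d_h²` is positive, then `χ = −1` or `χ = −3`. -/
theorem stmt_5 (n ch2 : ℤ) (hn : 2 ≤ n)
    (dh dg : ℝ)
    (hsph : (-2 : ℝ) = (dh ^ 2 - dg ^ 2) - 2 * ((ch2 : ℝ) + 1))
    (hchi1 : -4 < n - ch2 - 2) (hchi2 : n - ch2 - 2 < 0)
    (hdisc : ((n : ℝ) + (ch2 : ℝ)) ^ 2 - 2 * (n : ℝ) * dh ^ 2 > 0) :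
    n - ch2 - 2 = -1 ∨ n - ch2 - 2 = -3 := by
  by_cases h : n = ch2
  · exfalso
    subst h
    have hn' : (2 : ℝ) ≤ (n : ℝ) := by exact_mod_cast hn
    have h1 : 2 * (n : ℝ) ≤ dh ^ 2 := by nlinarith [sq_nonneg dg]
    nlinarith [mul_le_mul_of_nonneg_left h1 (by linarith : (0 : ℝ) ≤ 2 * (n : ℝ))]
  · omega
end

section
/- Let n ≥ 2 and r ≥ 1 be integers, let ch₂ be an integer with n·r − ch₂ ≤ −2·r, and let d_h be a real number with d_h < 0 and d_h² ≥ 2·r·ch₂ + 2·(r² − 1). Then there exist no real numbers u and t with t > 0 such that d_h·(u² + t²) − 2·(n·r + ch₂)·u + 2·n·d_h = 0 and r·u ≤ d_h. -/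
/-- For integers `n ≥ 2`, `r ≥ 1`, `ch₂` with `nr − ch₂ ≤ −2r` and a real `d_h < 0` with
`d_h² ≥ 2r·ch₂ + 2(r² − 1)`, there are no reals `u`, `t` with `t > 0` satisfying the wall
equation `d_h(u² + t²) − 2(nr + ch₂)u + 2n·d_h = 0` together with `r·u ≤ d_h`. -/
theorem stmt_6 (n r ch2 : ℤ) (hn : 2 ≤ n) (hr : 1 ≤ r) (hch : n * r - ch2 ≤ -2 * r)
    (dh : ℝ) (hdh : dh < 0)
    (hdh2 : ((2 * r * ch2 + 2 * (r ^ 2 - 1) : ℤ) : ℝ) ≤ dh ^ 2) :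
    ¬ ∃ u t : ℝ, 0 < t ∧
      dh * (u ^ 2 + t ^ 2) - 2 * ((n : ℝ) * (r : ℝ) + (ch2 : ℝ)) * u + 2 * (n : ℝ) * dh = 0 ∧
      (r : ℝ) * u ≤ dh := by
  rintro ⟨u, t, ht, heq, hu⟩
  have hr' : (1 : ℝ) ≤ r := by exact_mod_cast hr
  have hc' : (n : ℝ) * r - ch2 ≤ -2 * r := by exact_mod_cast hch
  push_cast at hdh2
  generalize (n : ℝ) = N at *
  generalize (r : ℝ) = R at *
  generalize (ch2 : ℝ) = C at *
  have h1 : 0 ≤ dh ^ 2 - 2 * R * C := by nlinarith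
  have hRC : R * (N * R + 2 * R) ≤ R * C :=
    mul_le_mul_of_nonneg_left (by linarith) (by linarith)
  have h2 : 0 ≤ dh ^ 2 - R * (N * R + C) := by nlinarith
  have h3 : 0 ≤ dh * (R * u - dh) := mul_nonneg_of_nonpos_of_nonpos hdh.le (by linarith)
  have h4 : 0 ≤ dh * (R * u + dh) - 2 * R * (N * R + C) := by nlinarith
  have h5 : 0 ≤ (dh - R * u) * (dh * (R * u + dh) - 2 * R * (N * R + C)) :=
    mul_nonneg (by linarith) h4
  have h6 : 0 ≤ (-dh) * (dh ^ 2 - 2 * R * C) := mul_nonneg (by linarith) h1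
  have h7 : 0 < (-dh) * (R ^ 2 * t ^ 2) := mul_pos (by linarith) (by positivity)
  have h8 : R ^ 2 * (dh * (u ^ 2 + t ^ 2) - 2 * (N * R + C) * u + 2 * N * dh) = 0 := by
    rw [heq, mul_zero]
  have h9 : (dh - R * u) * (dh * (R * u + dh) - 2 * R * (N * R + C))
      + (-dh) * (dh ^ 2 - 2 * R * C) + (-dh) * (R ^ 2 * t ^ 2)
      = -(R ^ 2 * (dh * (u ^ 2 + t ^ 2) - 2 * (N * R + C) * u + 2 * N * dh)) := by ring
  linarith
end

section
/- Let n ≥ 2 and R ≥ 2 be integers. There exists M such that for every real m ≥ M the following holds: for each integer r with 1 ≤ r ≤ R, the set C_r := {(u,t) ∈ ℝ × ℝ_{>0} : (r² − r + 2 − n − m)·(u² + t²) − 2·√(2m−2)·u + 4·(r−1) = 0} is nonempty and is contained in a circle with center on the negative u-axis; the sets C_1, …, C_R are pairwise disjoint; for each 2 ≤ r ≤ R, every point of C_{r−1} lies strictly inside the circle containing C_r; and for 2 ≤ r ≤ R the positive t-axis intercept of C_r equals t_r = 2·√((r−1)/(n + m + r − 2 − r²)), and t_2 < t_3 < … < t_R.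 -/
/-- The wall `W_r` of the O'Grady vector `v_r` on the slice `P_H`, `H = (c+mf)/√(2m−2)`:
the set of points `(u, t)` with `t > 0` satisfying
`(r² − r + 2 − n − m)(u² + t²) − 2√(2m−2)·u + 4(r−1) = 0`. -/
noncomputable def wallSet (n : ℤ) (m : ℝ) (r : ℤ) : Set (ℝ × ℝ) :=
  {p | 0 < p.2 ∧
    ((r : ℝ) ^ 2 - (r : ℝ) + 2 - (n : ℝ) - m) * (p.1 ^ 2 + p.2 ^ 2)
      - 2 * Real.sqrt (2 * m - 2) * p.1 + 4 * ((r : ℝ) - 1) = 0}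

/-- The `u`-coordinate of the center of the circle cut out by the wall equation. -/
noncomputable def wallCenter (n : ℤ) (m : ℝ) (r : ℤ) : ℝ :=
  Real.sqrt (2 * m - 2) / ((r : ℝ) ^ 2 - (r : ℝ) + 2 - (n : ℝ) - m)

/-- The square of the radius of the circle cut out by the wall equation. -/
noncomputable def wallRadiusSq (n : ℤ) (m : ℝ) (r : ℤ) : ℝ :=
  (wallCenter n m r) ^ 2
    - 4 * ((r : ℝ) - 1) / ((r : ℝ) ^ 2 - (r : ℝ) + 2 - (n : ℝ) - m)

/-- The positive `t`-axis intercept `t_r = 2√((r−1)/(n + m + r − 2 − r²))`. -/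
noncomputable def tIntercept (n : ℤ) (m : ℝ) (r : ℤ) : ℝ :=
  2 * Real.sqrt (((r : ℝ) - 1) / ((n : ℝ) + m + (r : ℝ) - 2 - (r : ℝ) ^ 2))

theorem wall_aux {n R : ℤ} (hn : 2 ≤ n) {m : ℝ} (hm : (R : ℝ) ^ 2 + 5 ≤ m) {r : ℤ}
    (h1 : 1 ≤ r) (h2 : r ≤ R) :
    (r : ℝ) ^ 2 - (r : ℝ) + 2 - (n : ℝ) - m < 0 := by
  have hn' : (2 : ℝ) ≤ n := by exact_mod_cast hn
  have h1' : (1 : ℝ) ≤ r := by exact_mod_cast h1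
  have h2' : (r : ℝ) ≤ R := by exact_mod_cast h2
  nlinarith

theorem wall_inside {A s u t k : ℝ} (hA : A < 0)
    (h : 0 < A * (u ^ 2 + t ^ 2) - 2 * s * u + k) :
    (u - s / A) ^ 2 + t ^ 2 < (s / A) ^ 2 - k / A := by
  have h3 : (u - s / A) ^ 2 + t ^ 2 - ((s / A) ^ 2 - k / A)
      = (A * (u ^ 2 + t ^ 2) - 2 * s * u + k) / A := by
    have := hA.ne
    field_simp
    ring
  have h4 := div_neg_of_pos_of_neg h hA
  linarith

theorem wall_on {A s u t k : ℝ} (hA : A < 0) :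
    (u - s / A) ^ 2 + t ^ 2 = (s / A) ^ 2 - k / A ↔
      A * (u ^ 2 + t ^ 2) - 2 * s * u + k = 0 := by
  have h3 : (u - s / A) ^ 2 + t ^ 2 - ((s / A) ^ 2 - k / A)
      = (A * (u ^ 2 + t ^ 2) - 2 * s * u + k) / A := by
    have := hA.ne
    field_simp
    ring
  rw [← sub_eq_zero, h3, div_eq_zero_iff]
  simp [hA.ne]

theorem wall_disj {n m : ℝ} {r r' : ℤ} {s u t : ℝ} (h1 : 1 ≤ r) (h : r < r')
    (e : ((r : ℝ) ^ 2 - (r : ℝ) + 2 - n - m) * (u ^ 2 + t ^ 2)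
      - 2 * s * u + 4 * ((r : ℝ) - 1) = 0) :
    0 < ((r' : ℝ) ^ 2 - (r' : ℝ) + 2 - n - m) * (u ^ 2 + t ^ 2)
      - 2 * s * u + 4 * ((r' : ℝ) - 1) := by
  have h1' : (1 : ℝ) ≤ r := by exact_mod_cast h1
  have h' : (r : ℝ) < r' := by exact_mod_cast h
  have h5 : 0 < ((r' : ℝ) - r) * (((r' : ℝ) + r - 1) * (u ^ 2 + t ^ 2) + 4) := by
    have : 0 < (r' : ℝ) - r := by linarith
    have : 0 < (r' : ℝ) + r - 1 := by linarith
    positivity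
  linarith

/-- For `n ≥ 2` and `R ≥ 2` there is an `M` such that for all `m ≥ M`: each wall `C_r`
(`1 ≤ r ≤ R`) is nonempty and lies on a circle centered on the negative `u`-axis; the walls
`C_1, …, C_R` are pairwise disjoint; each `C_{r−1}` lies strictly inside the circle containing
`C_r`; for `2 ≤ r ≤ R` the positive `t`-axis intercept of `C_r` is
`t_r = 2√((r−1)/(n+m+r−2−r²))`; and `t_2 < t_3 < … < t_R`. -/
theorem stmt_7 (n R : ℤ) (hn : 2 ≤ n) (hR : 2 ≤ R) :
    ∃ M : ℝ, ∀ m : ℝ, M ≤ m →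
      (∀ r : ℤ, 1 ≤ r → r ≤ R →
        (wallSet n m r).Nonempty ∧
        wallCenter n m r < 0 ∧ 0 < wallRadiusSq n m r ∧
        wallSet n m r ⊆
          {p : ℝ × ℝ | (p.1 - wallCenter n m r) ^ 2 + p.2 ^ 2 = wallRadiusSq n m r}) ∧
      (∀ r r' : ℤ, 1 ≤ r → r ≤ R → 1 ≤ r' → r' ≤ R → r ≠ r' →
        wallSet n m r ∩ wallSet n m r' = ∅) ∧
      (∀ r : ℤ, 2 ≤ r → r ≤ R → ∀ p ∈ wallSet n m (r - 1),
        (p.1 - wallCenter n m r) ^ 2 + p.2 ^ 2 < wallRadiusSq n m r) ∧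
      (∀ r : ℤ, 2 ≤ r → r ≤ R →
        ((0 : ℝ), tIntercept n m r) ∈ wallSet n m r ∧
        ∀ t : ℝ, 0 < t → ((0 : ℝ), t) ∈ wallSet n m r → t = tIntercept n m r) ∧
      (∀ r : ℤ, 2 ≤ r → r < R → tIntercept n m r < tIntercept n m (r + 1)) := by
  refine ⟨(R : ℝ) ^ 2 + 5, fun m hm => ?_⟩
  have hs : 0 < Real.sqrt (2 * m - 2) := Real.sqrt_pos.2 (by nlinarith [sq_nonneg (R : ℝ)])
  have hneg := fun (r : ℤ) (h1 : 1 ≤ r) (h2 : r ≤ R) => wall_aux hn hm h1 h2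
  refine ⟨?_, ?_, ?_, ?_, ?_⟩
  · intro r h1 h2
    have hA := hneg r h1 h2
    have h1' : (1 : ℝ) ≤ r := by exact_mod_cast h1
    have hc : wallCenter n m r < 0 := div_neg_of_pos_of_neg hs hA
    have hr : 0 < wallRadiusSq n m r := by
      have h6 : 4 * ((r : ℝ) - 1) / ((r : ℝ) ^ 2 - (r : ℝ) + 2 - (n : ℝ) - m) ≤ 0 :=
        div_nonpos_of_nonneg_of_nonpos (by linarith) hA.le
      have h7 := sq_pos_of_neg hc
      unfold wallRadiusSq
      linarith
    refine ⟨⟨(wallCenter n m r, Real.sqrt (wallRadiusSq n m r)), Real.sqrt_pos.2 hr, ?_⟩,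
      hc, hr, ?_⟩
    · refine (wall_on hA).1 ?_
      change (wallCenter n m r - wallCenter n m r) ^ 2 + (Real.sqrt (wallRadiusSq n m r)) ^ 2
        = wallRadiusSq n m r
      rw [Real.sq_sqrt hr.le]
      ring
    · rintro p ⟨_, hp⟩
      exact (wall_on hA).2 hp
  · intro r r' h1 _ h1' _ hne
    ext p
    simp only [Set.mem_inter_iff, Set.mem_empty_iff_false, iff_false]
    rintro ⟨⟨_, e⟩, ⟨_, e'⟩⟩
    rcases lt_or_gt_of_ne hne with h | h
    · exact (wall_disj h1 h e).ne' e'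
    · exact (wall_disj h1' h e').ne' e
  · rintro r h1 h2 p ⟨_, hp⟩
    exact wall_inside (hneg r (by omega) h2) (wall_disj (by omega) (by omega : r - 1 < r) hp)
  · intro r h1 h2
    have hA := hneg r (by omega) h2
    have h1' : (2 : ℝ) ≤ r := by exact_mod_cast h1
    have hB : 0 < (n : ℝ) + m + (r : ℝ) - 2 - (r : ℝ) ^ 2 := by linarith
    have hq : 0 < ((r : ℝ) - 1) / ((n : ℝ) + m + (r : ℝ) - 2 - (r : ℝ) ^ 2) :=
      div_pos (by linarith) hB
    have hpos : 0 < tIntercept n m r := mul_pos two_pos (Real.sqrt_pos.2 hq)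
    have hsq : (tIntercept n m r) ^ 2 * ((n : ℝ) + m + (r : ℝ) - 2 - (r : ℝ) ^ 2)
        = 4 * ((r : ℝ) - 1) := by
      unfold tIntercept
      rw [mul_pow, Real.sq_sqrt hq.le, mul_assoc, div_mul_cancel₀ _ hB.ne']
      norm_num
    refine ⟨⟨hpos, ?_⟩, ?_⟩
    · simp only
      linarith
    · rintro t ht ⟨_, e⟩
      simp only at e
      have h8 : t ^ 2 = (tIntercept n m r) ^ 2 := by
        apply mul_right_cancel₀ hB.ne'
        linarith
      exact (sq_eq_sq₀ ht.le hpos.le).1 h8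
  · intro r h1 h2
    have hA := hneg (r + 1) (by omega) (by omega)
    have h1' : (2 : ℝ) ≤ r := by exact_mod_cast h1
    unfold tIntercept
    push_cast at hA ⊢
    have hB : 0 < (n : ℝ) + m + ((r : ℝ) + 1) - 2 - ((r : ℝ) + 1) ^ 2 := by linarith
    refine mul_lt_mul_of_pos_left (Real.sqrt_lt_sqrt ?_ ?_) two_pos
    · exact div_nonneg (by linarith) (by nlinarith)
    · exact div_lt_div₀ (by linarith) (by nlinarith) (by linarith) hB
end

section
/- Let n ≥ 2 and r ≥ 1 be integers. There exists M such that for every real m ≥ M: the sets A := {(u,t) ∈ ℝ × ℝ_{>0} : (2 − m)·(u² + t²) + 2·√(2m−2)·(2r−1)·u − 4·(2r−1)·(r−1) = 0} and B := {(u,t) ∈ ℝ × ℝ_{>0} : (r² − r + 2 − n − m)·(u² + t²) − 2·√(2m−2)·u + 4·(r−1) = 0} are disjoint; every point of A has u > 0, while the circle containing B has center with negative u-coordinate; and neither of the two closed disks bounded by the circles containing A and B contains the other. -/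
/-- The only possible wall of instability of the spherical line bundle `O(2(r−1)f)` on the
slice `P_H` (caused by `O(2(r−1)f − c)`, by Arcara–Miles): points `(u, t)` with `t > 0` and
`(2 − m)(u² + t²) + 2√(2m−2)(2r−1)u − 4(2r−1)(r−1) = 0`. -/
noncomputable def arcaraSet (m : ℝ) (r : ℤ) : Set (ℝ × ℝ) :=
  {p | 0 < p.2 ∧
    (2 - m) * (p.1 ^ 2 + p.2 ^ 2)
      + 2 * Real.sqrt (2 * m - 2) * (2 * (r : ℝ) - 1) * p.1
      - 4 * (2 * (r : ℝ) - 1) * ((r : ℝ) - 1) = 0}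

/-- Center of the circle containing `arcaraSet m r`. -/
noncomputable def arcaraCenter (m : ℝ) (r : ℤ) : ℝ :=
  Real.sqrt (2 * m - 2) * (2 * (r : ℝ) - 1) / (m - 2)

/-- Squared radius of the circle containing `arcaraSet m r`. -/
noncomputable def arcaraRadiusSq (m : ℝ) (r : ℤ) : ℝ :=
  (arcaraCenter m r) ^ 2 - 4 * (2 * (r : ℝ) - 1) * ((r : ℝ) - 1) / (m - 2)

/-- The two disks meet only where `x` (the squared distance to the origin) vanishes. -/
lemma disks_aux (a D k q s u x : ℝ) (ha : 0 < a) (hD : 0 < D) (hk : 0 < k)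
    (h1 : a * x - 2 * s * k * u + 4 * k * q ≤ 0) (h2 : D * x + 2 * s * u - 4 * q ≤ 0) :
    x ≤ 0 := by
  have h3 : (a + k * D) * x ≤ 0 := by
    have := mul_nonpos_of_nonneg_of_nonpos hk.le h2
    nlinarith
  by_contra! hx
  have : 0 < (a + k * D) * x := by positivity
  linarith

/-- Clearing denominators in the equation of the first disk. -/
lemma diskA_iff (a k q s u y : ℝ) (ha : 0 < a) :
    (u - s * k / a) ^ 2 + y - ((s * k / a) ^ 2 - 4 * k * q / a)
      = (a * (u ^ 2 + y) - 2 * s * k * u + 4 * k * q) / a := by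
  field_simp
  ring

/-- Clearing denominators in the equation of the second disk. -/
lemma diskB_iff (E q s u y : ℝ) (hE : E < 0) :
    (u - s / E) ^ 2 + y - ((s / E) ^ 2 - 4 * q / E)
      = (-E * (u ^ 2 + y) + 2 * s * u - 4 * q) / (-E) := by
  have := hE.ne
  field_simp
  ring

/-- For `n ≥ 2`, `r ≥ 1` there is `M` such that for all real `m ≥ M`: the Arcara–Miles wall `A`
of `O(2(r−1)f)` and the wall `B = W_r` are disjoint; every point of `A` has `u > 0` while the
circle containing `B` has center with negative `u`-coordinate; each set lies on its circle; and
neither of the two closed disks bounded by these circles contains the other. -/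
theorem stmt_8 (n r : ℤ) (hn : 2 ≤ n) (hr : 1 ≤ r) :
    ∃ M : ℝ, ∀ m : ℝ, M ≤ m →
      arcaraSet m r ∩ wallSet n m r = ∅ ∧
      (∀ p ∈ arcaraSet m r, 0 < p.1) ∧
      wallCenter n m r < 0 ∧
      arcaraSet m r ⊆
        {p : ℝ × ℝ | (p.1 - arcaraCenter m r) ^ 2 + p.2 ^ 2 = arcaraRadiusSq m r} ∧
      wallSet n m r ⊆
        {p : ℝ × ℝ | (p.1 - wallCenter n m r) ^ 2 + p.2 ^ 2 = wallRadiusSq n m r} ∧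
      ¬ ({p : ℝ × ℝ | (p.1 - arcaraCenter m r) ^ 2 + p.2 ^ 2 ≤ arcaraRadiusSq m r} ⊆
          {p : ℝ × ℝ | (p.1 - wallCenter n m r) ^ 2 + p.2 ^ 2 ≤ wallRadiusSq n m r}) ∧
      ¬ ({p : ℝ × ℝ | (p.1 - wallCenter n m r) ^ 2 + p.2 ^ 2 ≤ wallRadiusSq n m r} ⊆
          {p : ℝ × ℝ | (p.1 - arcaraCenter m r) ^ 2 + p.2 ^ 2 ≤ arcaraRadiusSq m r}) := by
  have hnR : (2 : ℝ) ≤ n := by exact_mod_cast hn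
  have hrR : (1 : ℝ) ≤ r := by exact_mod_cast hr
  refine ⟨(r : ℝ) ^ 2 + 3, fun m hm => ?_⟩
  have hr2 : 0 ≤ (r : ℝ) ^ 2 := sq_nonneg _
  have ha : 0 < m - 2 := by linarith
  have hE : (r : ℝ) ^ 2 - (r : ℝ) + 2 - (n : ℝ) - m < 0 := by linarith
  have hk : 0 < 2 * (r : ℝ) - 1 := by linarith
  have hq : 0 ≤ (r : ℝ) - 1 := by linarith
  have hs : 0 < Real.sqrt (2 * m - 2) := Real.sqrt_pos.mpr (by linarith)
  have hs2 : Real.sqrt (2 * m - 2) ^ 2 = 2 * m - 2 := Real.sq_sqrt (by linarith)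
  have hkq : 2 * (r : ℝ) - 1 = 2 * ((r : ℝ) - 1) + 1 := by ring
  unfold arcaraSet wallSet arcaraRadiusSq wallRadiusSq arcaraCenter wallCenter
  generalize Real.sqrt (2 * m - 2) = s at *
  generalize hEE : (r : ℝ) ^ 2 - (r : ℝ) + 2 - (n : ℝ) - m = E at *
  generalize 2 * (r : ℝ) - 1 = k at *
  generalize (r : ℝ) - 1 = q at *
  have hcA : 0 < s * k / (m - 2) := by positivity
  have hcB : s / E < 0 := div_neg_of_pos_of_neg hs hE
  have hD : 0 < -E := by linarith
  -- no nonzero point lies in both disks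
  have key : ∀ u y : ℝ, (u - s * k / (m - 2)) ^ 2 + y
        ≤ (s * k / (m - 2)) ^ 2 - 4 * k * q / (m - 2) →
      (u - s / E) ^ 2 + y ≤ (s / E) ^ 2 - 4 * q / E → u ^ 2 + y ≤ 0 := by
    intro u y h1 h2
    have e1 := diskA_iff (m - 2) k q s u y ha
    have e2 := diskB_iff E q s u y hE
    have h1' : ((m - 2) * (u ^ 2 + y) - 2 * s * k * u + 4 * k * q) / (m - 2) ≤ 0 := by
      linarith
    have h2' : (-E * (u ^ 2 + y) + 2 * s * u - 4 * q) / (-E) ≤ 0 := by linarith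
    rw [div_le_iff₀ ha, zero_mul] at h1'
    rw [div_le_iff₀ hD, zero_mul] at h2'
    exact disks_aux (m - 2) (-E) k q s u _ ha hD hk h1' h2'
  refine ⟨?_, ?_, hcB, ?_, ?_, ?_, ?_⟩
  · ext ⟨u, t⟩
    simp only [Set.mem_inter_iff, Set.mem_setOf_eq, Set.mem_empty_iff_false, iff_false]
    rintro ⟨⟨ht, h1⟩, -, h2⟩
    have := disks_aux (m - 2) (-E) k q s u (u ^ 2 + t ^ 2) ha hD hk (by linarith) (by linarith)
    have : 0 < t ^ 2 := by positivity
    nlinarith [sq_nonneg u]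
  · rintro ⟨u, t⟩ ⟨ht, h1⟩
    simp only at ht h1 ⊢
    have h3 : 0 < (m - 2) * (u ^ 2 + t ^ 2) := by positivity
    have h4 : 0 ≤ 4 * k * q := by positivity
    have h5 : 0 < (2 * s * k) * u := by linarith
    exact pos_of_mul_pos_right h5 (by positivity)
  · rintro ⟨u, t⟩ ⟨ht, h1⟩
    simp only [Set.mem_setOf_eq] at ht h1 ⊢
    have e1 := diskA_iff (m - 2) k q s u (t ^ 2) ha
    have : (m - 2) * (u ^ 2 + t ^ 2) - 2 * s * k * u + 4 * k * q = 0 := by linarith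
    rw [this, zero_div] at e1
    linarith
  · rintro ⟨u, t⟩ ⟨ht, h1⟩
    simp only [Set.mem_setOf_eq] at ht h1 ⊢
    have e1 := diskB_iff E q s u (t ^ 2) hE
    have : -E * (u ^ 2 + t ^ 2) + 2 * s * u - 4 * q = 0 := by linarith
    rw [this, zero_div] at e1
    linarith
  · intro h
    have hrad : 0 ≤ (s * k / (m - 2)) ^ 2 - 4 * k * q / (m - 2) := by
      have e : (s * k / (m - 2)) ^ 2 - 4 * k * q / (m - 2)
          = k * (s ^ 2 * k - 4 * q * (m - 2)) / (m - 2) ^ 2 := by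
        field_simp
      rw [e, hs2]
      have : 0 ≤ (2 * m - 2) * k - 4 * q * (m - 2) := by
        rw [hkq]; nlinarith
      positivity
    have hA : ((s * k / (m - 2), 0) : ℝ × ℝ) ∈ {p : ℝ × ℝ | (p.1 - s * k / (m - 2)) ^ 2 + p.2 ^ 2
        ≤ (s * k / (m - 2)) ^ 2 - 4 * k * q / (m - 2)} := by
      simpa using hrad
    have := key _ _ hA (h hA)
    simp only at this
    nlinarith
  · intro h
    have hrad : 0 ≤ (s / E) ^ 2 - 4 * q / E := by
      have : 4 * q / E ≤ 0 := div_nonpos_of_nonneg_of_nonpos (by positivity) hE.le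
      nlinarith [sq_nonneg (s / E)]
    have hB : ((s / E, 0) : ℝ × ℝ) ∈ {p : ℝ × ℝ | (p.1 - s / E) ^ 2 + p.2 ^ 2
        ≤ (s / E) ^ 2 - 4 * q / E} := by
      simpa using hrad
    have := key _ _ (h hB) hB
    simp only at this
    nlinarith
end

section
/- Let k, r, m, n be integers with r ≥ 1 and m ≥ n ≥ 2. If −(m−1)·k² + n + k·(m−n) = r·(r+1), then k = 0 and n = r·(r+1). -/
/-- Diophantine lemma: for integers `k`, `r`, `m`, `n` with `r ≥ 1` and `m ≥ n ≥ 2`, if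
`−(m−1)k² + n + k(m−n) = r(r+1)` then `k = 0` and `n = r(r+1)`. -/
theorem stmt_9 (k r m n : ℤ) (hr : 1 ≤ r) (hmn : n ≤ m) (hn : 2 ≤ n)
    (h : -(m - 1) * k ^ 2 + n + k * (m - n) = r * (r + 1)) :
    k = 0 ∧ n = r * (r + 1) := by
  have h2 : 2 ≤ r * (r + 1) := by nlinarith
  have key : (k - 1) * ((m - 1) * k + (n - 1)) = 1 - r * (r + 1) := by
    rw [← h]; ring
  have hk : k = 0 := by
    by_contra hne
    rcases lt_or_gt_of_ne hne with hlt | hgt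
    · have h3 : (m - 1) * k + (n - 1) ≤ 0 := by nlinarith
      have h4 := mul_nonneg_of_nonpos_of_nonpos (show k - 1 ≤ 0 by omega) h3
      linarith
    · have h3 : 0 ≤ (m - 1) * k + (n - 1) := by nlinarith
      have h4 := mul_nonneg (show 0 ≤ k - 1 by omega) h3
      linarith
  subst hk
  exact ⟨rfl, by linarith⟩
end
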